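/- arXiv:1412.1414 — 3 statements merged into one kernel-verified Lean document; each statement's English description precedes it below -/
import Mathlib

section
/- Let d, p ≥ 1 and let (X, Y) be a random vector with X valued in ℝ^d and Y in ℝ^p, satisfying E‖X‖ < ∞ and E‖Y‖ < ∞. Then the squared distance covariance V²(X,Y) = ∫_{ℝ^d × ℝ^p} |φ_{X,Y}(t,s) − φ_X(t)·φ_Y(s)|² w(t,s) dt ds satisfies V²(X,Y) ≥ 0, and V²(X,Y) = 0 if and only if X and Y are independent. -/
open MeasureTheory ProbabilityTheory Complex
open scoped RealInnerProductSpace ENNReal BigOperators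

/-- The constant `c_l = π^{(1+l)/2} / Γ((1+l)/2)`. -/
noncomputable def cConst (l : ℕ) : ℝ :=
  Real.pi ^ ((1 + (l : ℝ)) / 2) / Real.Gamma ((1 + (l : ℝ)) / 2)

/-- The weight function `w(t,s) = (c_d c_p ‖t‖^{1+d} ‖s‖^{1+p})⁻¹`. -/
noncomputable def dCovWeight (d p : ℕ)
    (t : EuclideanSpace ℝ (Fin d)) (s : EuclideanSpace ℝ (Fin p)) : ℝ :=
  (cConst d * cConst p * ‖t‖ ^ (1 + d) * ‖s‖ ^ (1 + p))⁻¹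

/-- The squared distance covariance
`V²(X,Y) = ∫ |φ_{X,Y}(t,s) − φ_X(t) φ_Y(s)|² w(t,s) dt ds`, as an extended real. -/
noncomputable def distCov2 (d p : ℕ) {Ω : Type*} [MeasurableSpace Ω] (P : Measure Ω)
    (X : Ω → EuclideanSpace ℝ (Fin d)) (Y : Ω → EuclideanSpace ℝ (Fin p)) : ℝ≥0∞ :=
  ∫⁻ ts : EuclideanSpace ℝ (Fin d) × EuclideanSpace ℝ (Fin p),
    ENNReal.ofReal
      (‖(∫ ω, Complex.exp (Complex.I * ((⟪ts.1, X ω⟫ + ⟪ts.2, Y ω⟫ : ℝ) : ℂ)) ∂P)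
          - (∫ ω, Complex.exp (Complex.I * ((⟪ts.1, X ω⟫ : ℝ) : ℂ)) ∂P)
            * ∫ ω, Complex.exp (Complex.I * ((⟪ts.2, Y ω⟫ : ℝ) : ℂ)) ∂P‖ ^ 2
        * dCovWeight d p ts.1 ts.2)

/-!
Put `Δ(t, s) = φ_{X,Y}(t, s) - φ_X(t) φ_Y(s)`. Since a law is determined by its characteristic
function, `X` and `Y` are independent iff `Δ` vanishes identically. On the other hand `Δ` is
continuous and the weight is positive off the null set `{t = 0} ∪ {s = 0}`, so the integral of
`‖Δ‖² w` vanishes iff `Δ = 0` almost everywhere, iff `Δ = 0` everywhere because Lebesgue measure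
charges every nonempty open set.
-/

theorem lintegral_ofReal_norm_pow_mul_eq_zero_iff {T G : Type*} [TopologicalSpace T]
    [MeasurableSpace T] [OpensMeasurableSpace T] [NormedAddCommGroup G] {μ : Measure T}
    [μ.IsOpenPosMeasure] {f : T → G} {w : T → ℝ} {n : ℕ} (hn : n ≠ 0) (hf : Continuous f)
    (hw : AEMeasurable w μ) (hw_pos : ∀ᵐ x ∂μ, 0 < w x) :
    ∫⁻ x, ENNReal.ofReal (‖f x‖ ^ n * w x) ∂μ = 0 ↔ f = 0 := by
  have h_meas : AEMeasurable (fun x ↦ ENNReal.ofReal (‖f x‖ ^ n * w x)) μ :=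
    ((hf.norm.pow n).measurable.aemeasurable.mul hw).ennreal_ofReal
  rw [lintegral_eq_zero_iff' h_meas, ← hf.ae_eq_iff_eq μ continuous_zero]
  refine Filter.eventually_congr (hw_pos.mono fun x hx ↦ ?_)
  have h_nonneg : 0 ≤ ‖f x‖ ^ n * w x := by positivity
  rw [Pi.zero_apply, Pi.zero_apply, ENNReal.ofReal_eq_zero, h_nonneg.ge_iff_eq',
    mul_eq_zero_iff_right hx.ne', pow_eq_zero_iff hn, norm_eq_zero]

section CharFun

variable {Ω E F : Type*} [MeasurableSpace Ω] {P : Measure Ω}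
  [NormedAddCommGroup E] [InnerProductSpace ℝ E] [MeasurableSpace E]
  [NormedAddCommGroup F] [InnerProductSpace ℝ F] [MeasurableSpace F]
  {X : Ω → E} {Y : Ω → F}

theorem charFun_map_eq_integral_exp [OpensMeasurableSpace E] (hX : AEMeasurable X P) (t : E) :
    charFun (P.map X) t = ∫ ω, Complex.exp (Complex.I * (⟪t, X ω⟫ : ℝ)) ∂P := by
  rw [charFun_apply, integral_map hX (by fun_prop)]
  simp only [mul_comm, real_inner_comm]

variable [BorelSpace E] [BorelSpace F] [SecondCountableTopology F]

theorem charFun_map_toLp_prodMk_eq_integral_exp (hX : AEMeasurable X P) (hY : AEMeasurable Y P)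
    (t : E) (s : F) :
    charFun (P.map fun ω ↦ WithLp.toLp 2 (X ω, Y ω)) (WithLp.toLp 2 (t, s)) =
      ∫ ω, Complex.exp (Complex.I * (⟪t, X ω⟫ + ⟪s, Y ω⟫ : ℝ)) ∂P := by
  rw [charFun_map_eq_integral_exp (by fun_prop)]
  simp only [WithLp.prod_inner_apply]

/-- The difference `φ_{X,Y}(t, s) - φ_X(t) φ_Y(s)` between the joint characteristic function and
the product of the marginal ones, as a function of the pair `(t, s)`. The joint law is taken on the
`L²` product, since `E × F` itself carries the sup norm and hence no inner product. -/
noncomputable def charFunDefect (P : Measure Ω) (X : Ω → E) (Y : Ω → F) (ts : E × F) : ℂ :=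
  charFun (P.map fun ω ↦ WithLp.toLp 2 (X ω, Y ω)) (WithLp.toLp 2 ts)
    - charFun (P.map X) ts.1 * charFun (P.map Y) ts.2

variable [SecondCountableTopology E]

theorem continuous_charFunDefect [IsFiniteMeasure P] : Continuous (charFunDefect P X Y) := by
  have h_joint := continuous_charFun.comp (WithLp.prod_continuous_toLp 2 E F)
    (g := charFun (P.map fun ω ↦ WithLp.toLp 2 (X ω, Y ω)))
  exact h_joint.sub
    ((continuous_charFun.comp continuous_fst).mul (continuous_charFun.comp continuous_snd))

theorem indepFun_iff_charFunDefect_eq_zero [CompleteSpace E] [CompleteSpace F] [IsFiniteMeasure P]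
    (hX : AEMeasurable X P) (hY : AEMeasurable Y P) :
    IndepFun X Y P ↔ charFunDefect P X Y = 0 := by
  rw [indepFun_iff_charFun_prod hX hY, funext_iff, (WithLp.equiv 2 (E × F)).forall_congr_left]
  simp only [charFunDefect, Pi.zero_apply, sub_eq_zero]
  rfl

end CharFun

theorem cConst_pos (l : ℕ) : 0 < cConst l :=
  div_pos (Real.rpow_pos_of_pos Real.pi_pos _) (Real.Gamma_pos_of_pos (by positivity))

section DistCov

variable {d p : ℕ}

theorem dCovWeight_pos {t : EuclideanSpace ℝ (Fin d)} {s : EuclideanSpace ℝ (Fin p)}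
    (ht : t ≠ 0) (hs : s ≠ 0) : 0 < dCovWeight d p t s := by
  have hcd := cConst_pos d
  have hcp := cConst_pos p
  unfold dCovWeight
  positivity

theorem ae_dCovWeight_pos (hd : 1 ≤ d) (hp : 1 ≤ p) :
    ∀ᵐ ts : EuclideanSpace ℝ (Fin d) × EuclideanSpace ℝ (Fin p), 0 < dCovWeight d p ts.1 ts.2 := by
  have : Nonempty (Fin d) := ⟨⟨0, hd⟩⟩
  have : Nonempty (Fin p) := ⟨⟨0, hp⟩⟩
  filter_upwards [Measure.quasiMeasurePreserving_fst.ae (Measure.ae_ne volume 0),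
    Measure.quasiMeasurePreserving_snd.ae (Measure.ae_ne volume 0)] with ts ht hs
  exact dCovWeight_pos ht hs

theorem measurable_dCovWeight :
    Measurable fun ts : EuclideanSpace ℝ (Fin d) × EuclideanSpace ℝ (Fin p) ↦
      dCovWeight d p ts.1 ts.2 := by
  unfold dCovWeight
  fun_prop

variable {Ω : Type*} [MeasurableSpace Ω] {P : Measure Ω}
  {X : Ω → EuclideanSpace ℝ (Fin d)} {Y : Ω → EuclideanSpace ℝ (Fin p)}

theorem distCov2_eq_lintegral_charFunDefect (hX : AEMeasurable X P) (hY : AEMeasurable Y P) :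
    distCov2 d p P X Y =
      ∫⁻ ts, ENNReal.ofReal (‖charFunDefect P X Y ts‖ ^ 2 * dCovWeight d p ts.1 ts.2) := by
  simp only [distCov2, charFunDefect, ← charFun_map_eq_integral_exp hX,
    ← charFun_map_eq_integral_exp hY, ← charFun_map_toLp_prodMk_eq_integral_exp hX hY]

theorem stmt_1_general [IsFiniteMeasure P] (hd : 1 ≤ d) (hp : 1 ≤ p)
    (hX : AEMeasurable X P) (hY : AEMeasurable Y P) :
    distCov2 d p P X Y = 0 ↔ IndepFun X Y P := by
  rw [distCov2_eq_lintegral_charFunDefect hX hY, indepFun_iff_charFunDefect_eq_zero hX hY]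
  exact lintegral_ofReal_norm_pow_mul_eq_zero_iff two_ne_zero continuous_charFunDefect
    measurable_dCovWeight.aemeasurable (ae_dCovWeight_pos hd hp)

end DistCov

theorem stmt_1
    (d p : ℕ) (hd : 1 ≤ d) (hp : 1 ≤ p)
    {Ω : Type*} [MeasurableSpace Ω] (P : Measure Ω) [IsProbabilityMeasure P]
    (X : Ω → EuclideanSpace ℝ (Fin d)) (Y : Ω → EuclideanSpace ℝ (Fin p))
    (hX : Measurable X) (hY : Measurable Y)
    (hX1 : Integrable (fun ω => ‖X ω‖) P)
    (hY1 : Integrable (fun ω => ‖Y ω‖) P) :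
    0 ≤ distCov2 d p P X Y
    ∧ (distCov2 d p P X Y = 0 ↔ IndepFun X Y P) :=
  ⟨zero_le, stmt_1_general hd hp hX.aemeasurable hY.aemeasurable⟩
end

section
/- Let n ≥ 1, d, p ≥ 1, and let x_1,…,x_n ∈ ℝ^d and y_1,…,y_n ∈ ℝ^p. Define the Euclidean distance matrices G^X = (‖x_i − x_j‖)_{1≤i,j≤n} and G^Y = (‖y_i − y_j‖)_{1≤i,j≤n}. Then Tr[G^X H G^Y H] ≥ 0; in particular the empirical squared distance covariance V²_n = (1/n²)·Tr[G^X H G^Y H] is nonnegative. -/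
open Matrix
open scoped BigOperators

/-- The `n × n` centering matrix `H = Iₙ - (1/n) Jₙ`. -/
noncomputable def centeringMatrix (n : ℕ) : Matrix (Fin n) (Fin n) ℝ :=
  1 - (n : ℝ)⁻¹ • Matrix.of (fun _ _ => (1 : ℝ))

/-!
A Euclidean distance matrix is conditionally negative semidefinite. For squared distances this is
the identity `∑ cᵢ cⱼ ‖vᵢ - vⱼ‖² = -2 ‖∑ cᵢ vᵢ‖²`, valid when `∑ cᵢ = 0`. Distances on the line are
averages of squared distances, `|a - b| = ∫ (1_{t < a} - 1_{t < b})² dt`, and distances in a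
finite-dimensional space are, up to a positive constant, averages of distances on the line, namely
of `|⟪u, v⟫|` over `u` in the unit ball, by rotation invariance.

Centering turns a conditionally negative semidefinite matrix `A` into a positive semidefinite
matrix `-HAH`. As `H` is idempotent, `Tr (A H B H) = Tr ((-HAH) (-HBH))`, and the trace of a product
of two positive semidefinite matrices is nonnegative.
-/

open MeasureTheory Metric Set

/-- Conditional negative semidefiniteness of a real symmetric matrix: its quadratic form is
nonpositive on the vectors whose entries sum to zero. This is the property of distance matrices
that double centering converts into positive semidefiniteness. -/
structure IsCondNegSemidef {ι : Type*} [Fintype ι] (A : Matrix ι ι ℝ) : Prop where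
  isSymm : A.IsSymm
  sum_mul_nonpos : ∀ c : ι → ℝ, ∑ i, c i = 0 → ∑ i, ∑ j, c i * c j * A i j ≤ 0

namespace IsCondNegSemidef

variable {ι : Type*} [Fintype ι]

theorem smul {A : Matrix ι ι ℝ} (hA : IsCondNegSemidef A) {r : ℝ} (hr : 0 ≤ r) :
    IsCondNegSemidef (r • A) where
  isSymm := hA.isSymm.smul r
  sum_mul_nonpos c hc := by
    simpa only [Matrix.smul_apply, smul_eq_mul, mul_left_comm _ r, ← Finset.mul_sum] using
      mul_nonpos_of_nonneg_of_nonpos hr (hA.sum_mul_nonpos c hc)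

theorem integral {Ω : Type*} [MeasurableSpace Ω] {μ : Measure Ω} {A : Ω → Matrix ι ι ℝ}
    (hA : ∀ ω, IsCondNegSemidef (A ω)) (hint : ∀ i j, Integrable (fun ω => A ω i j) μ) :
    IsCondNegSemidef (Matrix.of fun i j => ∫ ω, A ω i j ∂μ) where
  isSymm := IsSymm.ext fun i j => integral_congr_ae (.of_forall fun ω => (hA ω).isSymm.apply i j)
  sum_mul_nonpos c hc := by
    have hterm (i j : ι) : Integrable (fun ω => c i * c j * A ω i j) μ :=
      (hint i j).const_mul _
    have hform : ∑ i, ∑ j, c i * c j * ∫ ω, A ω i j ∂μ =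
        ∫ ω, ∑ i, ∑ j, c i * c j * A ω i j ∂μ := by
      simp only [integral_finsetSum _ fun i _ => integrable_finsetSum _ fun j _ => hterm i j,
        integral_finsetSum _ fun j _ => hterm _ j, integral_const_mul]
    simp only [Matrix.of_apply, hform]
    exact integral_nonpos fun ω => (hA ω).sum_mul_nonpos c hc

variable {E : Type*} [NormedAddCommGroup E] [InnerProductSpace ℝ E]

theorem norm_sub_sq (v : ι → E) : IsCondNegSemidef (Matrix.of fun i j => ‖v i - v j‖ ^ 2) where
  isSymm := IsSymm.ext fun i j => by simp only [Matrix.of_apply, norm_sub_rev]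
  sum_mul_nonpos c hc := by
    have hform := inner_sum_smul_sum_smul_of_sum_eq_zero v hc v hc
    have hnonneg := real_inner_self_nonneg (x := ∑ i, c i • v i)
    simp only [Matrix.of_apply, sq]
    linarith

end IsCondNegSemidef

theorem sq_indicator_Iio_sub_indicator_Iio (a b t : ℝ) :
    ((Iio a).indicator 1 t - (Iio b).indicator 1 t : ℝ) ^ 2 =
      (Ico (min a b) (max a b)).indicator 1 t := by
  simp only [indicator_apply, mem_Iio, mem_Ico, Pi.one_apply, min_le_iff, lt_max_iff]
  grind

theorem integrable_sq_indicator_Iio_sub_indicator_Iio (a b : ℝ) :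
    Integrable fun t : ℝ => ((Iio a).indicator 1 t - (Iio b).indicator 1 t : ℝ) ^ 2 := by
  simp only [sq_indicator_Iio_sub_indicator_Iio]
  exact (integrableOn_const (by simp)).integrable_indicator measurableSet_Ico

theorem integral_sq_indicator_Iio_sub_indicator_Iio (a b : ℝ) :
    ∫ t : ℝ, ((Iio a).indicator 1 t - (Iio b).indicator 1 t : ℝ) ^ 2 = |a - b| := by
  simp only [sq_indicator_Iio_sub_indicator_Iio]
  rw [integral_indicator_one measurableSet_Ico, Real.volume_real_Ico_of_le min_le_max,
    max_sub_min_eq_abs']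

theorem IsCondNegSemidef.abs_sub {ι : Type*} [Fintype ι] (a : ι → ℝ) :
    IsCondNegSemidef (Matrix.of fun i j => |a i - a j|) := by
  have hsq (t : ℝ) := IsCondNegSemidef.norm_sub_sq fun i => (Iio (a i)).indicator (1 : ℝ → ℝ) t
  simp only [Real.norm_eq_abs, sq_abs] at hsq
  simpa only [Matrix.of_apply, integral_sq_indicator_Iio_sub_indicator_Iio] using
    IsCondNegSemidef.integral hsq fun i j =>
      integrable_sq_indicator_Iio_sub_indicator_Iio (a i) (a j)

section UnitBall

variable {E : Type*} [NormedAddCommGroup E] [InnerProductSpace ℝ E] [FiniteDimensional ℝ E]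
  [MeasurableSpace E] [BorelSpace E]

theorem integrableOn_closedBall_abs_inner (v : E) :
    IntegrableOn (fun u : E => |inner ℝ u v|) (closedBall 0 1) :=
  ContinuousOn.integrableOn_compact (isCompact_closedBall _ _) (by fun_prop)

theorem setIntegral_closedBall_abs_inner_eq_of_norm_eq {v w : E} (h : ‖v‖ = ‖w‖) :
    ∫ u in closedBall (0 : E) 1, |inner ℝ u v| = ∫ u in closedBall (0 : E) 1, |inner ℝ u w| := by
  let R := Submodule.reflection (ℝ ∙ (v - w))ᗮ
  have hRv : R v = w := Submodule.reflection_sub h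
  have hball : R ⁻¹' closedBall 0 1 = closedBall 0 1 := by
    rw [R.preimage_closedBall, map_zero]
  calc ∫ u in closedBall (0 : E) 1, |inner ℝ u v|
      = ∫ u in R ⁻¹' closedBall 0 1, |inner ℝ (R u) w| := by
        simp only [hball, ← hRv, LinearIsometryEquiv.inner_map_map]
    _ = ∫ u in closedBall (0 : E) 1, |inner ℝ u w| :=
        R.measurePreserving.setIntegral_preimage_emb R.toHomeomorph.measurableEmbedding
          (fun u => |inner ℝ u w|) _

theorem setIntegral_closedBall_abs_inner_eq_norm_mul {e : E} (he : ‖e‖ = 1) (v : E) :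
    ∫ u in closedBall (0 : E) 1, |inner ℝ u v| =
      ‖v‖ * ∫ u in closedBall (0 : E) 1, |inner ℝ u e| := by
  have hnorm : ‖v‖ = ‖‖v‖ • e‖ := by rw [norm_smul, norm_norm, he, mul_one]
  rw [setIntegral_closedBall_abs_inner_eq_of_norm_eq hnorm, ← integral_const_mul]
  simp only [inner_smul_right, abs_mul, abs_norm]

theorem setIntegral_closedBall_abs_inner_pos {v : E} (hv : v ≠ 0) :
    0 < ∫ u in closedBall (0 : E) 1, |inner ℝ u v| := by
  rw [setIntegral_pos_iff_support_of_nonneg_ae (.of_forall fun u => abs_nonneg _)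
    (integrableOn_closedBall_abs_inner v)]
  have hopen : IsOpen ((Function.support fun u : E => |inner ℝ u v|) ∩ ball 0 1) :=
    (Continuous.isOpen_support (by fun_prop)).inter isOpen_ball
  have hmem : (2 * ‖v‖)⁻¹ • v ∈ (Function.support fun u : E => |inner ℝ u v|) ∩ ball 0 1 := by
    constructor
    · simp [inner_smul_left, hv]
    · have hhalf : ‖(2 * ‖v‖)⁻¹ • v‖ = 1 / 2 := by
        rw [norm_smul, norm_inv, norm_mul, norm_norm, Real.norm_ofNat]
        field_simp [norm_ne_zero_iff.2 hv]
      rw [mem_ball_zero_iff, hhalf]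
      exact one_half_lt_one
  exact (hopen.measure_pos volume ⟨_, hmem⟩).trans_le
    (measure_mono (inter_subset_inter_right _ ball_subset_closedBall))

end UnitBall

namespace IsCondNegSemidef

variable {ι : Type*} [Fintype ι] {E : Type*} [NormedAddCommGroup E] [InnerProductSpace ℝ E]

theorem norm_sub_of_finiteDimensional [FiniteDimensional ℝ E] (x : ι → E) :
    IsCondNegSemidef (Matrix.of fun i j => ‖x i - x j‖) := by
  borelize E
  rcases subsingleton_or_nontrivial E with _ | _
  · simpa [Subsingleton.elim (_ : E) 0] using abs_sub (0 : ι → ℝ)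
  obtain ⟨e, he⟩ := exists_norm_eq E zero_le_one
  have hC : 0 < ∫ u in closedBall (0 : E) 1, |inner ℝ u e| :=
    setIntegral_closedBall_abs_inner_pos (norm_ne_zero_iff.1 (by simp [he]))
  have habs (u : E) := abs_sub fun i => inner ℝ u (x i)
  simp only [← inner_sub_right] at habs
  have hball := (IsCondNegSemidef.integral habs fun i j =>
    integrableOn_closedBall_abs_inner (x i - x j)).smul (inv_nonneg.2 hC.le)
  convert hball using 1
  ext i j
  simp only [Matrix.smul_apply, Matrix.of_apply, smul_eq_mul,
    setIntegral_closedBall_abs_inner_eq_norm_mul he (x i - x j)]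
  field_simp [hC.ne']

theorem norm_sub (x : ι → E) : IsCondNegSemidef (Matrix.of fun i j => ‖x i - x j‖) := by
  have := FiniteDimensional.span_of_finite ℝ (finite_range x)
  exact norm_sub_of_finiteDimensional fun i =>
    (⟨x i, Submodule.subset_span (mem_range_self i)⟩ : Submodule.span ℝ (range x))

end IsCondNegSemidef

theorem centeringMatrix_isSymm (n : ℕ) : (centeringMatrix n).IsSymm :=
  isSymm_one.sub (IsSymm.smul (IsSymm.ext fun _ _ => rfl) _)

theorem sum_centeringMatrix_mulVec {n : ℕ} (v : Fin n → ℝ) :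
    ∑ i, (centeringMatrix n *ᵥ v) i = 0 := by
  rcases eq_or_ne n 0 with rfl | hn
  · exact Finset.sum_empty
  · simp [centeringMatrix, mulVec, dotProduct, sub_mul, one_apply, Finset.sum_sub_distrib,
      ← Finset.mul_sum, hn]

theorem isIdempotentElem_centeringMatrix (n : ℕ) : IsIdempotentElem (centeringMatrix n) := by
  have hJ : IsIdempotentElem ((n : ℝ)⁻¹ • (Matrix.of fun _ _ => 1 : Matrix (Fin n) (Fin n) ℝ)) := by
    ext i j
    have hn : (n : ℝ) ≠ 0 := Nat.cast_ne_zero.2 i.pos.ne'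
    simp [Matrix.mul_apply, hn]
  exact hJ.one_sub

theorem IsCondNegSemidef.posSemidef_neg_centered {n : ℕ} {A : Matrix (Fin n) (Fin n) ℝ}
    (hA : IsCondNegSemidef A) :
    (-(centeringMatrix n * A * centeringMatrix n)).PosSemidef := by
  have hH : (centeringMatrix n)ᵀ = centeringMatrix n := centeringMatrix_isSymm n
  refine .of_dotProduct_mulVec_nonneg ?_ fun v => ?_
  · rw [isHermitian_iff_isSymm, IsSymm]
    simp only [transpose_neg, transpose_mul, hH, hA.isSymm.eq, Matrix.mul_assoc]
  · set w := centeringMatrix n *ᵥ v with hw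
    have hform : v ⬝ᵥ (centeringMatrix n * A * centeringMatrix n) *ᵥ v =
        ∑ i, ∑ j, w i * w j * A i j := by
      rw [← mulVec_mulVec, ← mulVec_mulVec, dotProduct_mulVec, ← mulVec_transpose, hH, ← hw]
      simp only [dotProduct, mulVec, Finset.mul_sum, mul_assoc, mul_comm (A _ _)]
    rw [star_trivial, neg_mulVec, dotProduct_neg, hform]
    exact neg_nonneg.2 (hA.sum_mul_nonpos w (sum_centeringMatrix_mulVec v))

open scoped ComplexOrder in
theorem trace_mul_nonneg_of_posSemidef {ι 𝕜 : Type*} [Fintype ι] [RCLike 𝕜]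
    {A B : Matrix ι ι 𝕜} (hA : A.PosSemidef) (hB : B.PosSemidef) : 0 ≤ (A * B).trace := by
  have hsum := (hA.hadamard hB.transpose).dotProduct_mulVec_nonneg 1
  simpa [dotProduct, mulVec, trace, Matrix.mul_apply] using hsum

theorem IsCondNegSemidef.trace_mul_centeringMatrix_nonneg {n : ℕ}
    {A B : Matrix (Fin n) (Fin n) ℝ} (hA : IsCondNegSemidef A) (hB : IsCondNegSemidef B) :
    0 ≤ (A * centeringMatrix n * B * centeringMatrix n).trace := by
  set H := centeringMatrix n
  have hH : H * H = H := isIdempotentElem_centeringMatrix n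
  calc 0 ≤ (-(H * A * H) * -(H * B * H)).trace :=
        trace_mul_nonneg_of_posSemidef hA.posSemidef_neg_centered hB.posSemidef_neg_centered
    _ = (H * (A * (H * H) * B * H)).trace := by simp only [neg_mul_neg, Matrix.mul_assoc]
    _ = (A * (H * H) * B * H * H).trace := trace_mul_comm _ _
    _ = (A * H * B * H).trace := by rw [Matrix.mul_assoc _ H H, hH]

theorem stmt_5_general {E F : Type*} [NormedAddCommGroup E] [InnerProductSpace ℝ E]
    [NormedAddCommGroup F] [InnerProductSpace ℝ F] {n : ℕ} (x : Fin n → E) (y : Fin n → F) :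
    0 ≤ ((Matrix.of fun i j => ‖x i - x j‖) * centeringMatrix n
      * (Matrix.of fun i j => ‖y i - y j‖) * centeringMatrix n).trace :=
  (IsCondNegSemidef.norm_sub x).trace_mul_centeringMatrix_nonneg (IsCondNegSemidef.norm_sub y)

theorem stmt_5 (n : ℕ) (hn : 1 ≤ n) (d p : ℕ) (hd : 1 ≤ d) (hp : 1 ≤ p)
    (x : Fin n → EuclideanSpace ℝ (Fin d)) (y : Fin n → EuclideanSpace ℝ (Fin p)) :
    0 ≤ ((Matrix.of fun i j => ‖x i - x j‖) * centeringMatrix n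
          * (Matrix.of fun i j => ‖y i - y j‖) * centeringMatrix n).trace
    ∧ 0 ≤ (1 / (n : ℝ) ^ 2) * ((Matrix.of fun i j => ‖x i - x j‖) * centeringMatrix n
          * (Matrix.of fun i j => ‖y i - y j‖) * centeringMatrix n).trace :=
  ⟨stmt_5_general x y, mul_nonneg (by positivity) (stmt_5_general x y)⟩
end

section
/- Let n ≥ 1 and let K and L be symmetric real n × n matrices. For indices i, j, q, r in {1,…,n} define h_{ijqr} = (1/4!)·Σ_{(t,u,v,w)} [K_{tu}·L_{tu} + K_{tu}·L_{vw} − 2·K_{tu}·L_{tv}], the sum being taken over all 24 permutations (t,u,v,w) of (i,j,q,r). Then (1/n⁴)·Σ_{i,j,q,r=1}^n h_{ijqr} = (1/n²)·Tr[K H L H]; that is, the empirical HSIC equals the V-statistic with symmetrized kernel h. -/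
open Matrix
open scoped BigOperators

/-- The symmetrized kernel `h_{ijqr}`: the average over all `4! = 24` permutations
`(t,u,v,w)` of `(i,j,q,r)` of `K_{tu} L_{tu} + K_{tu} L_{vw} - 2 K_{tu} L_{tv}`. -/
noncomputable def symmKernel {n : ℕ} (K L : Matrix (Fin n) (Fin n) ℝ)
    (i j q r : Fin n) : ℝ :=
  (1 / (Nat.factorial 4 : ℝ)) * ∑ σ : Equiv.Perm (Fin 4),
    (K (![i, j, q, r] (σ 0)) (![i, j, q, r] (σ 1)) * L (![i, j, q, r] (σ 0)) (![i, j, q, r] (σ 1))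
      + K (![i, j, q, r] (σ 0)) (![i, j, q, r] (σ 1))
        * L (![i, j, q, r] (σ 2)) (![i, j, q, r] (σ 3))
      - 2 * K (![i, j, q, r] (σ 0)) (![i, j, q, r] (σ 1))
        * L (![i, j, q, r] (σ 0)) (![i, j, q, r] (σ 2)))

/-!
Relabelling the summation indices shows that averaging a kernel over permutations of its arguments
does not change its sum over all tuples, so the V-statistic may be computed with the unsymmetrized
kernel. Writing `𝟙` for the all-ones vector, that sum is
`n² Tr(K Lᵀ) + (𝟙 ⬝ K𝟙) (𝟙 ⬝ L𝟙) - 2 n (K𝟙 ⬝ L𝟙)`. Since `J = 𝟙 𝟙ᵀ` has rank one, expanding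
`Tr(K H L H)` with `H = 1 - n⁻¹ 𝟙 𝟙ᵀ` gives, for symmetric `K` and `L`, the same three terms
divided by `n²`.
-/

section TupleSums

variable {ι κ M : Type*} [Fintype ι] [AddCommMonoid M]

theorem sum_sum_comp_perm [Fintype κ] [DecidableEq κ] (F : (κ → ι) → M) :
    ∑ x : κ → ι, ∑ σ : Equiv.Perm κ, F (x ∘ σ) = (Fintype.card κ).factorial • ∑ x, F x := by
  have sum_comp_perm (σ : Equiv.Perm κ) : ∑ x : κ → ι, F (x ∘ σ) = ∑ x, F x :=
    (σ.symm.arrowCongr (Equiv.refl ι)).sum_comp F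
  rw [Finset.sum_comm]
  simp only [sum_comp_perm, Finset.sum_const, Finset.card_univ, Fintype.card_perm]

theorem sum_tuple_succ {m : ℕ} (F : (Fin (m + 1) → ι) → M) :
    ∑ x, F x = ∑ i, ∑ y, F (vecCons i y) := by
  rw [← (Fin.consEquiv fun _ ↦ ι).sum_comp F, Fintype.sum_prod_type]
  rfl

theorem sum_quadruple (F : (Fin 4 → ι) → M) :
    ∑ x, F x = ∑ i, ∑ j, ∑ q, ∑ r, F ![i, j, q, r] := by
  simp only [sum_tuple_succ, Fintype.sum_unique, Subsingleton.elim default ![]]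

end TupleSums

section Kernel

variable {ι R : Type*} [CommRing R]

/-- The unsymmetrized HSIC kernel `K_{tu} L_{tu} + K_{tu} L_{vw} - 2 K_{tu} L_{tv}`, as a function
of the quadruple `x = (t, u, v, w)`; `symmKernel` is its average over permutations of `x`. -/
def hsicKernel (K L : Matrix ι ι R) (x : Fin 4 → ι) : R :=
  K (x 0) (x 1) * L (x 0) (x 1) + K (x 0) (x 1) * L (x 2) (x 3)
    - 2 * K (x 0) (x 1) * L (x 0) (x 2)

theorem sum_hsicKernel [Fintype ι] (K L : Matrix ι ι R) :
    ∑ x, hsicKernel K L x =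
      (Fintype.card ι : R) ^ 2 * (K * Lᵀ).trace + (1 ⬝ᵥ K *ᵥ 1) * (1 ⬝ᵥ L *ᵥ 1)
        - 2 * Fintype.card ι * (K *ᵥ 1 ⬝ᵥ L *ᵥ 1) := by
  have mulVec_one_apply (A : Matrix ι ι R) (i : ι) : (A *ᵥ 1) i = ∑ j, A i j := dotProduct_one _
  have trace_term : ∑ i, ∑ j, ∑ _q : ι, ∑ _r : ι, K i j * L i j =
      (Fintype.card ι : R) ^ 2 * (K * Lᵀ).trace := by
    simp only [← sum_hadamard_eq, hadamard_apply, Finset.sum_const, Finset.card_univ,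
      nsmul_eq_mul, Finset.mul_sum, pow_two, mul_assoc]
  have total_term : ∑ i, ∑ j, ∑ q, ∑ r, K i j * L q r = (1 ⬝ᵥ K *ᵥ 1) * (1 ⬝ᵥ L *ᵥ 1) := by
    simp only [one_dotProduct, mulVec_one_apply, ← Finset.mul_sum, ← Finset.sum_mul]
  have row_term : ∑ i, ∑ j, ∑ q, ∑ _r : ι, 2 * K i j * L i q =
      2 * Fintype.card ι * (K *ᵥ 1 ⬝ᵥ L *ᵥ 1) := by
    have row_term_apply (i : ι) : ∑ j, ∑ q, ∑ _r : ι, 2 * K i j * L i q =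
        2 * Fintype.card ι * ((K *ᵥ 1) i * (L *ᵥ 1) i) := by
      simp only [mulVec_one_apply, Finset.sum_const, Finset.card_univ, nsmul_eq_mul,
        ← Finset.mul_sum, ← Finset.sum_mul]
      ring
    rw [dotProduct, Finset.mul_sum]
    exact Finset.sum_congr rfl fun i _ ↦ row_term_apply i
  rw [sum_quadruple, ← trace_term, ← total_term, ← row_term]
  simp only [← Finset.sum_add_distrib, ← Finset.sum_sub_distrib]
  rfl

theorem symmKernel_eq_sum_hsicKernel {n : ℕ} (K L : Matrix (Fin n) (Fin n) ℝ) (i j q r : Fin n) :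
    symmKernel K L i j q r =
      1 / (Nat.factorial 4 : ℝ) * ∑ σ : Equiv.Perm (Fin 4), hsicKernel K L (![i, j, q, r] ∘ σ) :=
  rfl

theorem sum_symmKernel {n : ℕ} (K L : Matrix (Fin n) (Fin n) ℝ) :
    ∑ i, ∑ j, ∑ q, ∑ r, symmKernel K L i j q r = ∑ x, hsicKernel K L x := by
  have factorial_ne_zero : (Nat.factorial 4 : ℝ) ≠ 0 := mod_cast Nat.factorial_ne_zero 4
  simp only [symmKernel_eq_sum_hsicKernel, ← Finset.mul_sum]
  rw [← sum_quadruple fun x ↦ ∑ σ : Equiv.Perm (Fin 4), hsicKernel K L (x ∘ σ),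
    sum_sum_comp_perm, Fintype.card_fin, nsmul_eq_mul, one_div,
    inv_mul_cancel_left₀ factorial_ne_zero]

end Kernel

section Trace

variable {ι κ μ R : Type*} [Fintype ι] [Fintype κ]

theorem trace_mul_vecMulVec [NonUnitalCommSemiring R] (A : Matrix ι κ R) (u : κ → R) (v : ι → R) :
    (A * vecMulVec u v).trace = v ⬝ᵥ A *ᵥ u := by
  rw [mul_vecMulVec, trace_vecMulVec, dotProduct_comm]

theorem dotProduct_mul_mulVec [Fintype μ] [NonUnitalCommSemiring R] (A : Matrix ι κ R)
    (B : Matrix κ μ R) (u : ι → R) (v : μ → R) :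
    u ⬝ᵥ (A * B) *ᵥ v = Aᵀ *ᵥ u ⬝ᵥ B *ᵥ v := by
  rw [← mulVec_mulVec, dotProduct_mulVec, mulVec_transpose]

theorem trace_mul_mul_mul_one_sub_smul_vecMulVec [DecidableEq ι] [CommRing R]
    {K L : Matrix ι ι R} (hK : K.IsSymm) (hL : L.IsSymm) (c : R) (v : ι → R) :
    (K * (1 - c • vecMulVec v v) * L * (1 - c • vecMulVec v v)).trace =
      (K * L).trace - 2 * c * (K *ᵥ v ⬝ᵥ L *ᵥ v) + c ^ 2 * ((v ⬝ᵥ K *ᵥ v) * (v ⬝ᵥ L *ᵥ v)) := by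
  have trace_outer_right : (K * L * vecMulVec v v).trace = K *ᵥ v ⬝ᵥ L *ᵥ v := by
    rw [trace_mul_vecMulVec, dotProduct_mul_mulVec, hK.eq]
  have trace_outer_middle : (K * vecMulVec v v * L).trace = K *ᵥ v ⬝ᵥ L *ᵥ v := by
    rw [trace_mul_cycle, trace_mul_vecMulVec, dotProduct_mul_mulVec, hL.eq, dotProduct_comm]
  have trace_outer_both : (K * vecMulVec v v * L * vecMulVec v v).trace =
      (v ⬝ᵥ K *ᵥ v) * (v ⬝ᵥ L *ᵥ v) := by
    rw [trace_mul_vecMulVec, mul_vecMulVec, vecMulVec_mul, vecMulVec_mulVec,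
      ← dotProduct_mulVec, dotProduct_smul, op_smul_eq_mul]
  simp only [mul_sub, sub_mul, mul_one, mul_smul_comm, smul_mul_assoc, trace_sub, trace_smul,
    smul_eq_mul, trace_outer_right, trace_outer_middle, trace_outer_both]
  ring

end Trace

theorem centeringMatrix_eq_one_sub_smul_vecMulVec (n : ℕ) :
    centeringMatrix n = 1 - (n : ℝ)⁻¹ • vecMulVec (1 : Fin n → ℝ) 1 := by
  ext
  simp [centeringMatrix]

theorem stmt_7 (n : ℕ) (hn : 1 ≤ n)
    (K L : Matrix (Fin n) (Fin n) ℝ) (hK : K.IsSymm) (hL : L.IsSymm) :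
    (1 / (n : ℝ) ^ 4) * ∑ i, ∑ j, ∑ q, ∑ r, symmKernel K L i j q r
      = (1 / (n : ℝ) ^ 2) * (K * centeringMatrix n * L * centeringMatrix n).trace := by
  have n_ne_zero : (n : ℝ) ≠ 0 := Nat.cast_ne_zero.mpr (by lia)
  rw [sum_symmKernel, sum_hsicKernel, centeringMatrix_eq_one_sub_smul_vecMulVec,
    trace_mul_mul_mul_one_sub_smul_vecMulVec hK hL, hL.eq, Fintype.card_fin]
  field_simp
  ring
end
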